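/- Let F be a finite field with q elements of characteristic greater than 2, let k be a positive integer, and let 0 < ρ < 1/(k+1). Define g(m) = Σ_{j=1}^k m_j², Enc(m) = (m, g(m)) ∈ F^{k+1}, and Dec(m', y) = m' if y = g(m') and ⊥ otherwise. Then (Enc, Dec) is a weak (ρ, q^{ρ(k+1) − 1})-AMD code. -/

import Mathlib

open scoped Classical BigOperators

/-- Probability of an event `E` under a finitely supported probability mass function `p`. -/
noncomputable def pr {Ω : Type*} [Fintype Ω] (p : Ω → ℝ) (E : Ω → Prop) : ℝ :=
  ∑ ω : Ω, if E ω then p ω else 0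

/-- Min-entropy `H∞(X) = -log₂ max_x Pr[X = x]`. -/
noncomputable def minEntropy {Ω α : Type*} [Fintype Ω] [Fintype α]
    (p : Ω → ℝ) (X : Ω → α) : ℝ :=
  - Real.logb 2 (⨆ x : α, pr p (fun ω => X ω = x))

/-- Conditional (average) min-entropy
`H̃∞(X|Z) = -log₂ Σ_z Pr[Z=z] · max_x Pr[X=x | Z=z] = -log₂ Σ_z max_x Pr[X=x ∧ Z=z]`. -/
noncomputable def condMinEntropy {Ω α β : Type*} [Fintype Ω] [Fintype α] [Fintype β]
    (p : Ω → ℝ) (X : Ω → α) (Z : Ω → β) : ℝ :=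
  - Real.logb 2 (∑ z : β, ⨆ x : α, pr p (fun ω => X ω = x ∧ Z ω = z))

/-- A deterministic coding scheme `(Enc, Dec)` (codeword length `n` over an alphabet of
size `q`) is a weak `(ρ, δ)`-AMD code: for every probability space, every uniform
message `M`, every leakage `Z` (jointly distributed with `M`) satisfying
`H̃∞(Enc(M) | Z) ≥ H∞(Enc(M)) − ρ·n·log₂ q`, and every function `A : 𝒵 → C`,
`Pr[Dec(Enc(M) + A(Z)) ∉ {M, ⊥}] ≤ δ`. -/
def IsWeakAMD {Msg C : Type*} [Fintype Msg] [Fintype C] [Add C]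
    (Enc : Msg → C) (Dec : C → Option Msg) (n q : ℕ) (ρ δ : ℝ) : Prop :=
  ∀ (Ω : Type) [Fintype Ω] (p : Ω → ℝ),
    (∀ ω, 0 ≤ p ω) → (∑ ω : Ω, p ω) = 1 →
    ∀ (M : Ω → Msg),
      (∀ m : Msg, pr p (fun ω => M ω = m) = 1 / (Fintype.card Msg : ℝ)) →
      ∀ (ZS : Type) [Fintype ZS] (Z : Ω → ZS),
        condMinEntropy p (fun ω => Enc (M ω)) Z
          ≥ minEntropy p (fun ω => Enc (M ω)) - ρ * n * Real.logb 2 q →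
        ∀ (A : ZS → C),
          pr p (fun ω => Dec (Enc (M ω) + A (Z ω))
              ∉ ({some (M ω), none} : Set (Option Msg))) ≤ δ

theorem card_hyperplane_le {F : Type*} [Field F] [Fintype F] (k : ℕ) (a : Fin k → F)
    (ha : a ≠ 0) (c : F) :
    (Finset.univ.filter (fun m : Fin k → F => ∑ j, a j * m j = c)).card
      ≤ Fintype.card F ^ (k - 1) := by
  obtain ⟨i, hi⟩ := Function.ne_iff.mp ha
  have hcard : Fintype.card ({j : Fin k // j ≠ i} → F) = Fintype.card F ^ (k - 1) := by
    rw [Fintype.card_fun]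
    congr 1
    simp [Fintype.card_subtype_compl]
  rw [← hcard, ← Finset.card_univ]
  apply Finset.card_le_card_of_injOn (fun m j => m j.1) (fun _ _ => by simp)
  intro m hm m' hm' h
  simp only [Finset.coe_filter, Finset.mem_univ, true_and, Set.mem_ofPred_eq] at hm hm'
  have hne : ∀ j, j ≠ i → m j = m' j := fun j hj => congrFun h ⟨j, hj⟩
  rw [← Finset.add_sum_erase _ _ (Finset.mem_univ i)] at hm hm'
  have hs : ∑ j ∈ Finset.univ.erase i, a j * m j = ∑ j ∈ Finset.univ.erase i, a j * m' j :=
    Finset.sum_congr rfl (fun j hj => by rw [hne j (Finset.ne_of_mem_erase hj)])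
  rw [hs] at hm
  have h1 : a i * m i = a i * m' i := add_right_cancel (hm.trans hm'.symm)
  funext j
  by_cases hj : j = i
  · subst hj
    exact mul_left_cancel₀ hi h1
  · exact hne j hj

theorem pr_nonneg' {Ω : Type*} [Fintype Ω] (p : Ω → ℝ) (hp : ∀ ω, 0 ≤ p ω) (E : Ω → Prop) :
    0 ≤ pr p E :=
  Finset.sum_nonneg (fun ω _ => by split_ifs <;> simp [hp])

theorem pr_union_le {Ω Msg C ZS : Type*} [Fintype Ω] [Fintype Msg] [Fintype C] [Fintype ZS]
    (p : Ω → ℝ) (hp : ∀ ω, 0 ≤ p ω) (M : Ω → Msg) (Z : Ω → ZS) (Enc : Msg → C)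
    (B : ZS → Finset Msg) (N : ℕ) (hB : ∀ z, (B z).card ≤ N) (E : Ω → Prop)
    (hE : ∀ ω, E ω → M ω ∈ B (Z ω)) :
    pr p E ≤ N * ∑ z : ZS, ⨆ x : C, pr p (fun ω => Enc (M ω) = x ∧ Z ω = z) := by
  have hsup : ∀ (z : ZS) (x : C), pr p (fun ω => Enc (M ω) = x ∧ Z ω = z) ≤
      ⨆ x : C, pr p (fun ω => Enc (M ω) = x ∧ Z ω = z) := fun z x =>
    le_ciSup (f := fun x => pr p (fun ω => Enc (M ω) = x ∧ Z ω = z))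
      (Set.finite_range _).bddAbove x
  have h0 : ∀ z : ZS, 0 ≤ ⨆ x : C, pr p (fun ω => Enc (M ω) = x ∧ Z ω = z) := fun z =>
    Real.iSup_nonneg (fun x => pr_nonneg' p hp _)
  calc pr p E ≤ ∑ z : ZS, ∑ m ∈ B z, pr p (fun ω => Enc (M ω) = Enc m ∧ Z ω = z) := by
        unfold pr
        rw [Finset.sum_congr rfl (fun z _ => Finset.sum_comm), Finset.sum_comm]
        apply Finset.sum_le_sum
        intro ω _
        obtain ⟨f, hf⟩ : ∃ f : ZS → Msg → ℝ, f = fun z m =>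
            @ite ℝ (Enc (M ω) = Enc m ∧ Z ω = z) (Classical.propDecidable _) (p ω) 0 := ⟨_, rfl⟩
        have hnn : ∀ z m, 0 ≤ f z m := by
          intro z m
          rw [hf]
          dsimp only
          split_ifs <;> simp [hp]
        have key : (if E ω then p ω else 0) ≤ ∑ z : ZS, ∑ m ∈ B z, f z m := by
          split_ifs with h
          · calc p ω = f (Z ω) (M ω) := by simp [hf]
              _ ≤ ∑ m ∈ B (Z ω), f (Z ω) m :=
                Finset.single_le_sum (f := fun m => f (Z ω) m) (fun m _ => hnn _ m) (hE ω h)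
              _ ≤ _ := Finset.single_le_sum (f := fun z => ∑ m ∈ B z, f z m)
                  (fun z _ => Finset.sum_nonneg (fun m _ => hnn z m)) (Finset.mem_univ _)
          · exact Finset.sum_nonneg (fun z _ => Finset.sum_nonneg (fun m _ => hnn z m))
        rw [hf] at key
        exact key
    _ ≤ ∑ z : ZS, N * ⨆ x : C, pr p (fun ω => Enc (M ω) = x ∧ Z ω = z) := by
        apply Finset.sum_le_sum
        intro z _
        refine (Finset.sum_le_card_nsmul _ _ _ (fun m _ => hsup z (Enc m))).trans ?_
        rw [nsmul_eq_mul]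
        exact mul_le_mul_of_nonneg_right (by exact_mod_cast hB z) (h0 z)
    _ = _ := by rw [Finset.mul_sum]

/-- over a finite field of characteristic `> 2`, the coding scheme
`Enc(m) = (m, Σ_j m_j²)` with the natural decoder is a weak
`(ρ, q^{ρ(k+1) − 1})`-AMD code for any `0 < ρ < 1/(k+1)`. -/
theorem stmt11 {F : Type*} [Field F] [Fintype F] (hchar : 2 < ringChar F)
    (k : ℕ) (hk : 0 < k) (ρ : ℝ) (hρ0 : 0 < ρ) (hρ1 : ρ < 1 / ((k : ℝ) + 1)) :
    IsWeakAMD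
      (fun m : Fin k → F => ((m, ∑ j : Fin k, (m j) ^ 2) : (Fin k → F) × F))
      (fun c : (Fin k → F) × F =>
        if c.2 = ∑ j : Fin k, (c.1 j) ^ 2 then some c.1 else none)
      (k + 1) (Fintype.card F)
      ρ ((Fintype.card F : ℝ) ^ (ρ * ((k : ℝ) + 1) - 1)) := by
  intro Ω _ p hp hsum M hM ZS _ Z hZ A
  have hq1 : 1 < Fintype.card F := Fintype.one_lt_card
  have hq : (0 : ℝ) < Fintype.card F := by exact_mod_cast (by omega : 0 < Fintype.card F)
  have h2 : (2 : F) ≠ 0 := Ring.two_ne_zero (by omega)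
  set B : ZS → Finset (Fin k → F) := fun z =>
    if (A z).1 = 0 then ∅ else Finset.univ.filter (fun m : Fin k → F =>
      ∑ j, (2 * (A z).1 j) * m j = (A z).2 - ∑ j, (A z).1 j ^ 2) with hBdef
  have hB : ∀ z, (B z).card ≤ Fintype.card F ^ (k - 1) := by
    intro z
    simp only [hBdef]
    split_ifs with h
    · simp
    · refine card_hyperplane_le k (fun j => 2 * (A z).1 j) ?_ _
      intro h'
      apply h
      funext j
      have := congrFun h' j
      simpa [h2] using this
  refine (pr_union_le p hp M Z
    (fun m : Fin k → F => ((m, ∑ j : Fin k, (m j) ^ 2) : (Fin k → F) × F)) B _ hB _ ?_).trans ?_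
  · intro ω hω
    simp only [hBdef]
    by_cases hc : ∑ j, (M ω j) ^ 2 + (A (Z ω)).2 = ∑ j, (M ω j + (A (Z ω)).1 j) ^ 2
    · have ha : (A (Z ω)).1 ≠ 0 := by
        intro h0
        apply hω
        have h3 : (A (Z ω)).2 = 0 := by simpa [h0] using hc
        simp [h0, h3]
      rw [if_neg ha]
      simp only [Finset.mem_filter, Finset.mem_univ, true_and]
      have : ∑ j, (M ω j + (A (Z ω)).1 j) ^ 2 = ∑ j, (M ω j) ^ 2 +
          ∑ j, (2 * (A (Z ω)).1 j) * M ω j + ∑ j, (A (Z ω)).1 j ^ 2 := by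
        rw [← Finset.sum_add_distrib, ← Finset.sum_add_distrib]
        exact Finset.sum_congr rfl (fun j _ => by ring)
      rw [this] at hc
      linear_combination -hc
    · exact absurd (by simp [hc]) hω
  · unfold condMinEntropy minEntropy at hZ
    have hmax : (⨆ x : (Fin k → F) × F, pr p (fun ω => ((M ω, ∑ j : Fin k, (M ω j) ^ 2) :
        (Fin k → F) × F) = x)) = ((Fintype.card F : ℝ) ^ k)⁻¹ := by
      have hM' : ∀ m, pr p (fun ω => M ω = m) = ((Fintype.card F : ℝ) ^ k)⁻¹ := by
        intro m
        rw [hM m]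
        simp
      apply le_antisymm
      · apply ciSup_le
        intro x
        rw [← hM' x.1]
        unfold pr
        apply Finset.sum_le_sum
        intro ω _
        split_ifs with h h'
        · exact le_rfl
        · exact absurd (congrArg Prod.fst h) h'
        · exact hp ω
        · exact le_rfl
      · rw [← hM' 0]
        refine le_trans (le_of_eq ?_) (le_ciSup (f := fun x : (Fin k → F) × F =>
          pr p (fun ω => ((M ω, ∑ j : Fin k, (M ω j) ^ 2) : (Fin k → F) × F) = x))
          (Set.finite_range _).bddAbove (0, ∑ j : Fin k, ((0 : Fin k → F) j) ^ 2))
        unfold pr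
        apply Finset.sum_congr rfl
        intro ω _
        congr 1
        apply propext
        constructor
        · intro h
          dsimp only at h ⊢
          rw [h]
        · intro h
          exact congrArg Prod.fst h
    rw [hmax] at hZ
    set S := ∑ z : ZS, ⨆ x : (Fin k → F) × F, pr p (fun ω =>
      ((M ω, ∑ j : Fin k, (M ω j) ^ 2) : (Fin k → F) × F) = x ∧ Z ω = z) with hS
    have hS0 : 0 ≤ S := Finset.sum_nonneg (fun z _ =>
      Real.iSup_nonneg (fun x => pr_nonneg' p hp _))
    rcases hS0.eq_or_lt with h | h
    · rw [← h, mul_zero]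
      positivity
    · have hlog : Real.logb 2 S ≤ Real.logb 2 (((Fintype.card F : ℝ) ^ k)⁻¹ *
          (Fintype.card F : ℝ) ^ (ρ * ((k : ℝ) + 1))) := by
        rw [Real.logb_mul (by positivity) (by positivity), Real.logb_rpow_eq_mul_logb_of_pos hq]
        push_cast at hZ
        linarith
      have hle := (Real.logb_le_logb (by norm_num) h (by positivity)).mp hlog
      push_cast
      calc (Fintype.card F : ℝ) ^ (k - 1) * S ≤ (Fintype.card F : ℝ) ^ (k - 1) *
            (((Fintype.card F : ℝ) ^ k)⁻¹ * (Fintype.card F : ℝ) ^ (ρ * ((k : ℝ) + 1))) :=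
            mul_le_mul_of_nonneg_left hle (by positivity)
        _ = _ := by
          rw [Real.rpow_sub hq, Real.rpow_one]
          obtain ⟨l, rfl⟩ : ∃ l, k = l + 1 := ⟨k - 1, by omega⟩
          rw [Nat.add_sub_cancel, pow_succ]
          field_simp
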